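/- There exist absolute constants c > 0, K ≥ 1 and c0 > 0 such that for every finite set A ⊆ ℝ, one has max{ Sid^+_K(A), Sid^+_K(exp(A)) } ≥ c0·|A|^{1/2 + c}, where exp(A) = {e^a : a ∈ A}. -/

import Mathlib

open scoped BigOperators

/-- The number of pairs `(x, y) ∈ S × S` with `x - y = mu`. -/
noncomputable def subPairCount {F : Type*} [Sub F] (mu : F) (S : Finset F) : ℕ :=
  Set.ncard {q : F × F | q.1 ∈ S ∧ q.2 ∈ S ∧ q.1 - q.2 = mu}

/-- `S` is additively `K`-Sidon: for every `mu ≠ 0` the number of pairs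
`(x, y) ∈ S × S` with `x - y = mu` is at most `K`. -/
def IsAddSidon {F : Type*} [SubtractionMonoid F] (K : ℝ) (S : Finset F) : Prop :=
  ∀ mu : F, mu ≠ 0 → (subPairCount mu S : ℝ) ≤ K

/-!
Let `X = exp A` and `N = #A`. If few `μ` have nearly `N` representations as a difference in `X`,
then a moment of the representation function is small, and a random sparse subset of `X` becomes
Sidon after deleting few elements. Otherwise the set `D` of these popular differences is large, and
so is the set `B ⊆ X` of the `b` such that `d + b ∈ X` for many `d ∈ D`.

Now run the same dichotomy on `log B ⊆ A`. Either it contains a large Sidon set, or it has a large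
set of popular differences, so that `r * b ∈ B` for many `b ∈ B` whenever `r` lies in a large set
`R`. In that case `d' + r * b ∈ X` for many quadruples `(r, b, d, d')` with `d + b ∈ X`, which makes
many of the lines with slope in `R` through points of `D × D` rich in `X × X`, more than an
incidence bound of Szemerédi–Trotter type allows.
-/

open Finset
open scoped Pointwise

section Richness

variable {α β ι : Type*}

/-- The number of points of the grid `X × Y` that lie on the graph of `f`. Representation counts of
differences and of quotients, and incidences with lines, are all of this form. -/
def richness [DecidableEq β] (X : Finset α) (Y : Finset β) (f : α → β) : ℕ := #{x ∈ X | f x ∈ Y}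

lemma richness_le_card_left [DecidableEq β] (X : Finset α) (Y : Finset β) (f : α → β) :
    richness X Y f ≤ #X :=
  card_filter_le X _

lemma richness_le_card_right [DecidableEq β] (X : Finset α) (Y : Finset β) {f : α → β}
    (hf : f.Injective) : richness X Y f ≤ #Y :=
  card_le_card_of_injOn f (fun _ hx => (mem_filter.1 hx).2) hf.injOn

lemma exists_monotone_block_map [LinearOrder α] (X : Finset α) {h : ℕ} (hh : 0 < h) :
    ∃ σ : α → ℕ, Monotone σ ∧ (∀ x ∈ X, σ x ≤ #X / h) ∧ ∀ c, #{x ∈ X | σ x = c} ≤ h := by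
  let rank : α → ℕ := fun x => #{y ∈ X | y < x}
  have rank_mono : Monotone rank := fun x y hxy =>
    card_le_card (monotone_filter_right X fun z _ hz => hz.trans_le hxy)
  have rank_strictMonoOn : StrictMonoOn rank X := fun x hx y _ hxy =>
    card_lt_card <| (ssubset_iff_of_subset
      (monotone_filter_right X fun z _ hz => hz.trans hxy)).2
      ⟨x, mem_filter.2 ⟨hx, hxy⟩, fun hx' => (mem_filter.1 hx').2.false⟩
  refine ⟨fun x => rank x / h, fun x y hxy => Nat.div_le_div_right (rank_mono hxy),
    fun x _ => Nat.div_le_div_right (card_filter_le X _), fun c => ?_⟩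
  have hmaps : Set.MapsTo rank ({x ∈ X | rank x / h = c} : Finset α) (Ico (c * h) (c * h + h)) := by
    intro x hx
    have hc : rank x / h = c := (mem_filter.1 hx).2
    rw [coe_Ico, Set.mem_Ico, ← hc]
    exact ⟨Nat.div_mul_le_self _ _, Nat.lt_div_mul_add hh⟩
  simpa using card_le_card_of_injOn rank hmaps
    (rank_strictMonoOn.injOn.mono (coe_subset.2 (filter_subset _ X)))

lemma card_filter_apply_eq_apply_le {γ : Type*} [DecidableEq γ] (X : Finset α)
    {σ : α → γ} {h : ℕ} (hσ : ∀ c, #{x ∈ X | σ x = c} ≤ h) :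
    #{p ∈ X ×ˢ X | σ p.1 = σ p.2} ≤ #X * h := by
  classical
  rw [mul_comm]
  refine card_le_mul_card_image_of_maps_to (f := Prod.fst)
    (fun p hp => (mem_product.1 (mem_filter.1 hp).1).1) h fun x _ => ?_
  refine (card_le_card_of_injOn Prod.snd ?_ ?_).trans (hσ (σ x))
  · rintro ⟨a, b⟩ hp
    simp only [coe_filter, mem_filter, mem_product, Set.mem_ofPred_eq] at hp ⊢
    obtain ⟨⟨⟨_, hb⟩, hab⟩, rfl⟩ := hp
    exact ⟨hb, hab.symm⟩
  · rintro ⟨a, b⟩ hp ⟨a', b'⟩ hp' (hb : b = b')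
    rw [mem_coe, mem_filter] at hp hp'
    exact Prod.ext (hp.2.trans hp'.2.symm) hb

lemma card_le_add_card_collisions [LinearOrder α] (S : Finset α) {σ : α → ℕ} {m : ℕ}
    (hσ : ∀ x ∈ S, σ x ≤ m) :
    #S ≤ m + 1 + #{p ∈ S ×ˢ S | p.1 < p.2 ∧ σ p.1 = σ p.2} := by
  set P := {p ∈ S ×ˢ S | p.1 < p.2 ∧ σ p.1 = σ p.2}
  have no_collision : ∀ x ∈ S \ P.image Prod.snd, ∀ y ∈ S, y < x → σ y ≠ σ x := by
    intro x hx y hy hyx hσyx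
    rw [mem_sdiff] at hx
    exact hx.2 (mem_image.2
      ⟨(y, x), mem_filter.2 ⟨mem_product.2 ⟨hy, hx.1⟩, hyx, hσyx⟩, rfl⟩)
  have hrest : #(S \ P.image Prod.snd) ≤ m + 1 := by
    rw [← card_range (m + 1)]
    refine card_le_card_of_injOn σ (fun x hx => ?_) fun x hx y hy hxy => ?_
    · exact mem_coe.2 (mem_range.2 (Nat.lt_succ_of_le (hσ x (mem_sdiff.1 hx).1)))
    · rcases lt_trichotomy x y with h | h | h
      · exact absurd hxy (no_collision y hy x (mem_sdiff.1 hx).1 h)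
      · exact h
      · exact absurd hxy.symm (no_collision x hx y (mem_sdiff.1 hy).1 h)
  calc #S ≤ #(S \ P.image Prod.snd) + #(P.image Prod.snd) := card_le_card_sdiff_add_card
    _ ≤ m + 1 + #P := add_le_add hrest card_image_le

/-- The curves `f i`, `i ∈ L`, are distinct and any two of them cross at most once. This is the
only property of lines that the incidence bound needs besides monotonicity. -/
def CrossAtMostOnce (L : Finset ι) (f : ι → α → β) : Prop :=
  ∀ i ∈ L, ∀ j ∈ L, ∀ x y, x ≠ y → f i x = f j x → f i y = f j y → i = j

variable [LinearOrder α] [LinearOrder β]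

-- Cut the grid into blocks. An increasing curve meets few blocks, so most of its points share a
-- block with an earlier point, and a pair of points in a common block determines the curve.
lemma sum_richness_le (X : Finset α) (Y : Finset β) (L : Finset ι) {f : ι → α → β}
    (hmono : ∀ i ∈ L, StrictMono (f i)) (hcross : CrossAtMostOnce L f)
    {h h' : ℕ} (hh : 0 < h) (hh' : 0 < h') :
    ∑ i ∈ L, richness X Y (f i) ≤ #L * (#X / h + #Y / h' + 1) + #X * h * (#Y * h') := by
  obtain ⟨σ, σ_mono, σ_le, σ_fiber⟩ := exists_monotone_block_map X hh
  obtain ⟨τ, τ_mono, τ_le, τ_fiber⟩ := exists_monotone_block_map Y hh'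
  let S : ι → Finset α := fun i => {x ∈ X | f i x ∈ Y}
  let P : ι → Finset (α × α) := fun i =>
    {p ∈ S i ×ˢ S i | p.1 < p.2 ∧ σ p.1 + τ (f i p.1) = σ p.2 + τ (f i p.2)}
  have richness_le : ∀ i ∈ L, richness X Y (f i) ≤ #X / h + #Y / h' + 1 + #(P i) := by
    refine fun i _ =>
      card_le_add_card_collisions (S i) (σ := fun x => σ x + τ (f i x)) fun x hx => ?_
    obtain ⟨hx, hfx⟩ := mem_filter.1 hx
    exact add_le_add (σ_le x hx) (τ_le _ hfx)
  have sum_card_P_le : ∑ i ∈ L, #(P i) ≤ #X * h * (#Y * h') := by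
    calc ∑ i ∈ L, #(P i) = #(L.sigma P) := (card_sigma L P).symm
      _ ≤ #({p ∈ X ×ˢ X | σ p.1 = σ p.2} ×ˢ {p ∈ Y ×ˢ Y | τ p.1 = τ p.2}) := by
        refine card_le_card_of_injOn (fun z => (z.2, (f z.1 z.2.1, f z.1 z.2.2))) ?_ ?_
        · rintro ⟨i, x, y⟩ hz
          simp only [P, S, mem_coe, mem_sigma, mem_filter, mem_product] at hz ⊢
          obtain ⟨hi, ⟨⟨hx, hfx⟩, hy, hfy⟩, hxy, hblock⟩ := hz
          have hσ := σ_mono hxy.le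
          have hτ := τ_mono ((hmono i hi).monotone hxy.le)
          exact ⟨⟨⟨hx, hy⟩, by lia⟩, ⟨hfx, hfy⟩, by lia⟩
        · rintro ⟨i, x, y⟩ hz ⟨j, x', y'⟩ hz' heq
          simp only [P, mem_coe, mem_sigma, mem_filter] at hz hz'
          simp only [Prod.mk.injEq] at heq
          obtain ⟨⟨rfl, rfl⟩, hfx, hfy⟩ := heq
          rw [hcross i hz.1 j hz'.1 x y hz.2.2.1.ne hfx hfy]
      _ ≤ #X * h * (#Y * h') := by
        rw [card_product]
        exact Nat.mul_le_mul (card_filter_apply_eq_apply_le X σ_fiber)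
          (card_filter_apply_eq_apply_le Y τ_fiber)
  calc ∑ i ∈ L, richness X Y (f i) ≤ ∑ i ∈ L, (#X / h + #Y / h' + 1 + #(P i)) :=
        sum_le_sum richness_le
    _ = #L * (#X / h + #Y / h' + 1) + ∑ i ∈ L, #(P i) := by
      rw [sum_add_distrib, sum_const, smul_eq_mul]
    _ ≤ _ := Nat.add_le_add_left sum_card_P_le _

lemma exists_block_size {n : ℕ} {k : ℝ} (hk : 0 < k) (hkn : k ≤ n) :
    ∃ h : ℕ, 0 < h ∧ ((n / h : ℕ) : ℝ) ≤ k / 8 ∧ h * k ≤ 9 * n := by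
  have hn : (0 : ℝ) < n := hk.trans_le hkn
  have hpos : 0 < 8 * n / k := by positivity
  refine ⟨⌈8 * n / k⌉₊, Nat.ceil_pos.2 hpos, ?_, ?_⟩
  · calc ((n / ⌈8 * n / k⌉₊ : ℕ) : ℝ) ≤ n / ⌈8 * n / k⌉₊ := Nat.cast_div_le
      _ ≤ n / (8 * n / k) := by gcongr; exact Nat.le_ceil _
      _ = k / 8 := by field_simp
  · calc ⌈8 * n / k⌉₊ * k ≤ (8 * n / k + 1) * k := by
          gcongr; exact (Nat.ceil_lt_add_one hpos.le).le
      _ = 8 * n + k := by field_simp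
      _ ≤ 9 * n := by linarith

theorem card_mul_pow_three_le_of_le_richness (X : Finset α) (Y : Finset β) (L : Finset ι)
    {f : ι → α → β} (hmono : ∀ i ∈ L, StrictMono (f i)) (hcross : CrossAtMostOnce L f)
    {k : ℝ} (hk : 4 ≤ k) (hrich : ∀ i ∈ L, k ≤ richness X Y (f i)) :
    #L * k ^ 3 ≤ 162 * (#X : ℝ) ^ 2 * (#Y : ℝ) ^ 2 := by
  rcases L.eq_empty_or_nonempty with rfl | ⟨i₀, hi₀⟩
  · simp only [card_empty, Nat.cast_zero, zero_mul]
    positivity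
  have hk0 : 0 < k := by linarith
  have hkX : k ≤ #X := (hrich i₀ hi₀).trans (mod_cast richness_le_card_left X Y _)
  have hkY : k ≤ #Y :=
    (hrich i₀ hi₀).trans (mod_cast richness_le_card_right X Y (hmono i₀ hi₀).injective)
  obtain ⟨h, hh, hblocks, hsize⟩ := exists_block_size hk0 hkX
  obtain ⟨h', hh', hblocks', hsize'⟩ := exists_block_size hk0 hkY
  have hupper : ∑ i ∈ L, (richness X Y (f i) : ℝ)
      ≤ #L * ((#X / h : ℕ) + (#Y / h' : ℕ) + 1) + #X * h * (#Y * h') :=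
    mod_cast sum_richness_le X Y L hmono hcross hh hh'
  have hlower : #L * k ≤ ∑ i ∈ L, (richness X Y (f i) : ℝ) := by
    rw [← nsmul_eq_mul]
    exact card_nsmul_le_sum L _ k hrich
  have hhalf : #L * (((#X / h : ℕ) : ℝ) + (#Y / h' : ℕ) + 1) ≤ #L * (k / 2) := by
    gcongr
    linarith
  have hpairs : #L * k ≤ 2 * (#X * h * (#Y * h')) := by linarith
  calc #L * k ^ 3 = #L * k * k ^ 2 := by ring
    _ ≤ 2 * (#X * h * (#Y * h')) * k ^ 2 := by gcongr
    _ = 2 * #X * #Y * ((h * k) * (h' * k)) := by ring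
    _ ≤ 2 * #X * #Y * ((9 * #X) * (9 * #Y)) := by gcongr
    _ = 162 * (#X : ℝ) ^ 2 * (#Y : ℝ) ^ 2 := by ring

end Richness

section WeightedIncidences

variable {α ι : Type*} [LinearOrder α]

lemma card_filter_le_richness_le (X : Finset α) (L : Finset ι) {f : ι → α → α}
    (hmono : ∀ i ∈ L, StrictMono (f i)) (hcross : CrossAtMostOnce L f) {k : ℝ} (hk : 4 ≤ k) :
    (#{i ∈ L | k ≤ richness X X (f i)} : ℝ) ≤ 162 * (#X : ℝ) ^ 4 / k ^ 3 := by
  rw [le_div_iff₀ (pow_pos (by linarith) 3)]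
  calc _ ≤ 162 * (#X : ℝ) ^ 2 * (#X : ℝ) ^ 2 :=
        card_mul_pow_three_le_of_le_richness X X _ (fun i hi => hmono i (mem_filter.1 hi).1)
          (fun i hi j hj => hcross i (mem_filter.1 hi).1 j (mem_filter.1 hj).1) hk
          fun i hi => (mem_filter.1 hi).2
    _ = 162 * (#X : ℝ) ^ 4 := by ring

lemma mul_le_add_ite_add_ite {x y a b m k : ℝ} (hx : 0 ≤ x) (hxa : x ≤ a) (hy : 0 ≤ y) (hyb : y ≤ b)
    (hm : 0 ≤ m) (hk : 0 ≤ k) :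
    x * y ≤ x * k + (if m ≤ x then a * b else 0) + (if k ≤ y then m * b else 0) := by
  have hxk : 0 ≤ x * k := by positivity
  have hmb : 0 ≤ m * b := mul_nonneg hm (hy.trans hyb)
  split_ifs with hmx hky hky
  · linarith [mul_le_mul hxa hyb hy (hx.trans hxa)]
  · linarith [mul_le_mul hxa hyb hy (hx.trans hxa)]
  · linarith [mul_le_mul (not_le.1 hmx).le hyb hy hm]
  · linarith [mul_le_mul_of_nonneg_left (not_le.1 hky).le hx]

-- Curves that are neither `m`-rich on `D` nor `k`-rich on `X` contribute the first term; the other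
-- two terms bound the contributions of the `m`-rich curves and of the `k`-rich ones.
lemma sum_richness_mul_richness_le (D X : Finset α) (L : Finset ι) {f : ι → α → α}
    (hmono : ∀ i ∈ L, StrictMono (f i)) (hcross : CrossAtMostOnce L f)
    {m k : ℝ} (hm : 4 ≤ m) (hk : 4 ≤ k) :
    ∑ i ∈ L, (richness D D (f i) : ℝ) * richness X X (f i) ≤
      (∑ i ∈ L, (richness D D (f i) : ℝ)) * k + 162 * (#D : ℝ) ^ 4 / m ^ 3 * (#D * #X)
        + 162 * (#X : ℝ) ^ 4 / k ^ 3 * (m * #X) := by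
  have pointwise : ∀ i ∈ L, (richness D D (f i) : ℝ) * richness X X (f i) ≤
      richness D D (f i) * k + (if m ≤ richness D D (f i) then (#D * #X : ℝ) else 0)
        + (if k ≤ richness X X (f i) then m * #X else 0) := fun i _ =>
    mul_le_add_ite_add_ite (Nat.cast_nonneg _) (mod_cast richness_le_card_left D D _)
      (Nat.cast_nonneg _) (mod_cast richness_le_card_left X X _) (by linarith) (by linarith)
  calc _ ≤ _ := sum_le_sum pointwise
    _ = (∑ i ∈ L, (richness D D (f i) : ℝ)) * k
        + #{i ∈ L | m ≤ richness D D (f i)} * (#D * #X : ℝ)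
        + #{i ∈ L | k ≤ richness X X (f i)} * (m * #X) := by
      rw [sum_add_distrib, sum_add_distrib, sum_mul, ← sum_filter, ← sum_filter, sum_const,
        sum_const, nsmul_eq_mul, nsmul_eq_mul]
    _ ≤ _ := by
      gcongr
      · exact card_filter_le_richness_le D L hmono hcross hm
      · exact card_filter_le_richness_le X L hmono hcross hk

end WeightedIncidences

section Lines

variable {F : Type*} [Ring F] [LinearOrder F]

/-- The affine map with slope `l.1` and intercept `l.2`, so that the incidence bound for curves
applies to families of lines encoded as sets of pairs. -/
def line (l : F × F) (x : F) : F := l.1 * x + l.2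

/-- The lines with slope in `R` that pass through a point of the grid `D × D`; translating such a
point by `(b, r * b)` moves it along the line of slope `r`. -/
def linesThrough (R D : Finset F) : Finset (F × F) :=
  (R ×ˢ D ×ˢ D).image fun z => (z.1, z.2.2 - z.1 * z.2.1)

lemma mk_mem_linesThrough {R D : Finset F} {r d d' : F} (hr : r ∈ R) (hd : d ∈ D) (hd' : d' ∈ D) :
    (r, d' - r * d) ∈ linesThrough R D :=
  mem_image.2 ⟨(r, d, d'), mem_product.2 ⟨hr, mem_product.2 ⟨hd, hd'⟩⟩, rfl⟩

lemma slope_mem_of_mem_linesThrough {R D : Finset F} {l : F × F} (hl : l ∈ linesThrough R D) :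
    l.1 ∈ R := by
  obtain ⟨z, hz, rfl⟩ := mem_image.1 hl
  exact (mem_product.1 hz).1

lemma sum_richness_linesThrough_le (R D : Finset F) :
    ∑ l ∈ linesThrough R D, richness D D (line l) ≤ #R * #D ^ 2 := by
  calc ∑ l ∈ linesThrough R D, richness D D (line l)
      = #((linesThrough R D).sigma fun l => {d ∈ D | line l d ∈ D}) := (card_sigma _ _).symm
    _ ≤ #(R ×ˢ D ×ˢ D) := by
      refine card_le_card_of_injOn (fun z => (z.1.1, z.2, line z.1 z.2)) ?_ ?_
      · rintro ⟨l, d⟩ hz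
        simp only [mem_coe, mem_sigma, mem_filter, mem_product] at hz ⊢
        exact ⟨slope_mem_of_mem_linesThrough hz.1, hz.2⟩
      · rintro ⟨⟨r, s⟩, d⟩ _ ⟨⟨r', s'⟩, d'⟩ _ heq
        simp only [line, Prod.mk.injEq] at heq
        obtain ⟨rfl, rfl, heq⟩ := heq
        rw [add_left_cancel heq]
    _ = #R * #D ^ 2 := by rw [card_product, card_product, sq]

-- If `d + b, d' + r * b ∈ X` with `d, d' ∈ D`, then the line of slope `r` through `(d, d')` also
-- passes through `(d + b, d' + r * b) ∈ X × X`.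
lemma sum_richness_mul_richness_le_sum_linesThrough (R D B X : Finset F) :
    ∑ r ∈ R, ∑ b ∈ B with r * b ∈ B, richness D X (· + b) * richness D X (· + r * b) ≤
      ∑ l ∈ linesThrough R D, richness D D (line l) * richness X X (line l) := by
  let T : F → Finset F := fun b => {d ∈ D | d + b ∈ X}
  calc _ = #(R.sigma fun r => {b ∈ B | r * b ∈ B}.sigma fun b => T b ×ˢ T (r * b)) := by
        simp only [card_sigma, card_product, richness, T]
    _ ≤ #((linesThrough R D).sigma fun l =>
          {d ∈ D | line l d ∈ D} ×ˢ {x ∈ X | line l x ∈ X}) := by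
      refine card_le_card_of_injOn
        (fun z => ⟨(z.1, z.2.2.2 - z.1 * z.2.2.1), (z.2.2.1, z.2.2.1 + z.2.1)⟩) ?_ ?_
      · rintro ⟨r, b, d, d'⟩ hz
        simp only [T, mem_coe, mem_sigma, mem_filter, mem_product] at hz ⊢
        obtain ⟨hr, -, ⟨hd, hbd⟩, hd', hbd'⟩ := hz
        have line_d : line (r, d' - r * d) d = d' := by simp only [line]; abel
        have line_x : line (r, d' - r * d) (d + b) = d' + r * b := by
          simp only [line, mul_add]; abel
        rw [line_d, line_x]
        exact ⟨mk_mem_linesThrough hr hd hd', ⟨hd, hd'⟩, hbd, hbd'⟩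
      · rintro ⟨r, b, d, d'⟩ _ ⟨r', b', e, e'⟩ _ heq
        simp only [Sigma.mk.injEq, Prod.mk.injEq, heq_eq_eq] at heq
        obtain ⟨⟨rfl, hs⟩, rfl, hx⟩ := heq
        rw [add_left_cancel hx, sub_left_inj.1 hs]
    _ = _ := by simp only [card_sigma, card_product, richness]

variable [IsStrictOrderedRing F]

lemma strictMono_line {l : F × F} (hl : 0 < l.1) : StrictMono (line l) := fun _ _ hxy =>
  add_lt_add_left (mul_lt_mul_of_pos_left hxy hl) l.2

lemma crossAtMostOnce_line (L : Finset (F × F)) : CrossAtMostOnce L line := by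
  rintro ⟨r, s⟩ - ⟨r', s'⟩ - x y hxy hx hy
  simp only [line] at hx hy
  have hslopes : (r - r') * (x - y) = 0 := by
    calc (r - r') * (x - y) = (r * x + s) - (r * y + s) - ((r' * x + s') - (r' * y + s')) := by
          noncomm_ring
      _ = 0 := by rw [hx, hy, sub_self]
  obtain rfl : r = r' :=
    sub_eq_zero.1 ((mul_eq_zero.1 hslopes).resolve_right (sub_ne_zero.2 hxy))
  rw [add_left_cancel hx]

lemma card_mul_le_of_forall_le_richness (X D B R : Finset F) (hR : ∀ r ∈ R, 0 < r)
    {E G m k : ℝ} (hE : 0 ≤ E) (hm : 4 ≤ m) (hk : 4 ≤ k)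
    (hB : ∀ b ∈ B, E ≤ richness D X (· + b)) (hG : ∀ r ∈ R, G ≤ richness B B (r * ·)) :
    #R * (G * E ^ 2) ≤ #R * (#D : ℝ) ^ 2 * k + 162 * (#D : ℝ) ^ 4 / m ^ 3 * (#D * #X)
      + 162 * (#X : ℝ) ^ 4 / k ^ 3 * (m * #X) := by
  have hmono : ∀ l ∈ linesThrough R D, StrictMono (line l) := fun l hl =>
    strictMono_line (hR _ (slope_mem_of_mem_linesThrough hl))
  calc #R * (G * E ^ 2)
      ≤ ∑ r ∈ R, ∑ b ∈ B with r * b ∈ B,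
          (richness D X (· + b) : ℝ) * richness D X (· + r * b) := by
        rw [← nsmul_eq_mul]
        refine card_nsmul_le_sum R _ _ fun r hr => ?_
        calc G * E ^ 2 ≤ richness B B (r * ·) * E ^ 2 := by gcongr; exact hG r hr
          _ ≤ _ := by
            rw [← nsmul_eq_mul]
            refine card_nsmul_le_sum _ _ _ fun b hb => ?_
            obtain ⟨hb, hrb⟩ := mem_filter.1 hb
            rw [sq]
            exact mul_le_mul (hB b hb) (hB _ hrb) hE (Nat.cast_nonneg _)
    _ ≤ ∑ l ∈ linesThrough R D, (richness D D (line l) : ℝ) * richness X X (line l) :=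
      mod_cast sum_richness_mul_richness_le_sum_linesThrough R D B X
    _ ≤ (∑ l ∈ linesThrough R D, (richness D D (line l) : ℝ)) * k
        + 162 * (#D : ℝ) ^ 4 / m ^ 3 * (#D * #X) + 162 * (#X : ℝ) ^ 4 / k ^ 3 * (m * #X) :=
      sum_richness_mul_richness_le D X _ hmono (crossAtMostOnce_line _) hm hk
    _ ≤ _ := by
      gcongr
      exact_mod_cast sum_richness_linesThrough_le R D

-- With `m = #D / s`, the first term of the upper bound is half of the lower bound, so one of the
-- other two is at least a quarter of it.
theorem card_mul_le_or_card_mul_card_mul_le (X D B R : Finset F) (hR : ∀ r ∈ R, 0 < r)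
    {φ k s : ℝ} (hφ : 0 < φ) (hs : 0 < s) (hsD : 4 * s ≤ #D) (hk : 4 ≤ k)
    (hB : ∀ b ∈ B, φ * #D ≤ richness D X (· + b))
    (hdil : ∀ r ∈ R, 2 * k / φ ^ 2 ≤ richness B B (r * ·)) :
    #R * k ≤ 324 * #X * s ^ 3 ∨ s * #R * #D * k ^ 4 ≤ 324 * (#X : ℝ) ^ 5 := by
  have hD : (0 : ℝ) < #D := by linarith
  have hcount := card_mul_le_of_forall_le_richness X D B R hR (by positivity)
    ((le_div_iff₀ hs).2 hsD) hk hB hdil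
  have main_term : #R * (2 * k / φ ^ 2 * (φ * #D) ^ 2) = 2 * (#R * (#D : ℝ) ^ 2 * k) := by
    field_simp
  have rich_in_D : 162 * (#D : ℝ) ^ 4 / (#D / s) ^ 3 * (#D * #X)
      = (#D : ℝ) ^ 2 * (162 * #X * s ^ 3) := by
    field_simp
  have rich_in_X : 162 * (#X : ℝ) ^ 4 / k ^ 3 * (#D / s * #X)
      = #D / (s * k ^ 3) * (162 * (#X : ℝ) ^ 5) := by
    field_simp
  rw [main_term, rich_in_D, rich_in_X] at hcount
  by_contra! h
  have hfirst : (#D : ℝ) ^ 2 * (324 * #X * s ^ 3) < (#D : ℝ) ^ 2 * (#R * k) :=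
    mul_lt_mul_of_pos_left h.1 (by positivity)
  have hsecond : #D / (s * k ^ 3) * (324 * (#X : ℝ) ^ 5)
      < #D / (s * k ^ 3) * (s * #R * #D * k ^ 4) :=
    mul_lt_mul_of_pos_left h.2 (by positivity)
  have hcancel : #D / (s * k ^ 3) * (s * #R * #D * k ^ 4) = (#D : ℝ) ^ 2 * (#R * k) := by
    field_simp
  linarith

end Lines

section SparseSubsets

variable {α : Type*}

lemma sum_powerset_superset_pow_mul_pow [DecidableEq α] {U B : Finset α} (hUB : U ⊆ B) (p : ℝ) :
    ∑ T ∈ B.powerset with U ⊆ T, p ^ #T * (1 - p) ^ #(B \ T) = p ^ #U := by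
  calc ∑ T ∈ B.powerset with U ⊆ T, p ^ #T * (1 - p) ^ #(B \ T)
      = ∑ T ∈ B.powerset, (∏ _i ∈ T, p) * ∏ i ∈ B \ T, if i ∈ U then 0 else 1 - p := by
        rw [sum_filter]
        refine sum_congr rfl fun T _ => ?_
        rw [prod_const]
        split_ifs with hUT
        · rw [prod_congr rfl fun i hi => if_neg fun hiU => (mem_sdiff.1 hi).2 (hUT hiU), prod_const]
        · obtain ⟨i, hiU, hiT⟩ := not_subset.1 hUT
          rw [prod_eq_zero (mem_sdiff.2 ⟨hUB hiU, hiT⟩), mul_zero]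
          exact if_pos hiU
    _ = ∏ i ∈ B, (p + if i ∈ U then 0 else 1 - p) := (prod_add _ _ _).symm
    _ = ∏ i ∈ B, if i ∈ U then p else 1 :=
        prod_congr rfl fun i _ => by split_ifs <;> ring
    _ = p ^ #U := by
        rw [prod_ite_mem, inter_eq_right.2 hUB, prod_const]

-- The first moment method: average over subsets whose elements are kept independently with
-- probability `p`.
lemma exists_subset_le_card_sub_card_filter [DecidableEq α] (B : Finset α)
    (H : Finset (Finset α)) (hH : ∀ W ∈ H, W ⊆ B) {p : ℝ} (hp0 : 0 ≤ p) (hp1 : p ≤ 1) :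
    ∃ T ⊆ B, p * #B - ∑ W ∈ H, p ^ #W ≤ (#T : ℝ) - #{W ∈ H | W ⊆ T} := by
  let w : Finset α → ℝ := fun T => p ^ #T * (1 - p) ^ #(B \ T)
  have sum_w : ∑ T ∈ B.powerset, w T = 1 := by
    simpa using sum_powerset_superset_pow_mul_pow (empty_subset B) p
  have mean_card : ∑ T ∈ B.powerset, w T * #T = p * #B := by
    calc ∑ T ∈ B.powerset, w T * #T = ∑ T ∈ B.powerset, ∑ b ∈ B with {b} ⊆ T, w T := by
          refine sum_congr rfl fun T hT => ?_
          simp only [singleton_subset_iff, filter_mem_eq_inter,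
            inter_eq_right.2 (mem_powerset.1 hT), sum_const, nsmul_eq_mul, mul_comm]
      _ = ∑ b ∈ B, ∑ T ∈ B.powerset with {b} ⊆ T, w T := sum_comm' (by grind)
      _ = ∑ _b ∈ B, p := sum_congr rfl fun b hb => by
          rw [sum_powerset_superset_pow_mul_pow (singleton_subset_iff.2 hb), card_singleton,
            pow_one]
      _ = p * #B := by rw [sum_const, nsmul_eq_mul, mul_comm]
  have mean_card_filter :
      ∑ T ∈ B.powerset, w T * #{W ∈ H | W ⊆ T} = ∑ W ∈ H, p ^ #W := by
    calc ∑ T ∈ B.powerset, w T * #{W ∈ H | W ⊆ T}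
        = ∑ T ∈ B.powerset, ∑ W ∈ H with W ⊆ T, w T := by
          simp only [sum_const, nsmul_eq_mul, mul_comm]
      _ = ∑ W ∈ H, ∑ T ∈ B.powerset with W ⊆ T, w T := sum_comm' (by grind)
      _ = ∑ W ∈ H, p ^ #W :=
          sum_congr rfl fun W hW => sum_powerset_superset_pow_mul_pow (hH W hW) p
  have hmean : ∑ T ∈ B.powerset, w T * (p * #B - ∑ W ∈ H, p ^ #W)
      = ∑ T ∈ B.powerset, w T * ((#T : ℝ) - #{W ∈ H | W ⊆ T}) := by
    simp only [mul_sub, sum_sub_distrib, ← sum_mul, sum_w, mean_card, mean_card_filter, one_mul]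
  by_contra! h
  obtain ⟨T, hT, hwT⟩ := exists_ne_zero_of_sum_ne_zero (sum_w.trans_ne one_ne_zero)
  have w_nonneg : ∀ T, 0 ≤ w T := fun T => mul_nonneg (by positivity) (pow_nonneg (by linarith) _)
  refine (sum_lt_sum (fun T hT => ?_) ⟨T, hT, ?_⟩).ne' hmean
  · exact mul_le_mul_of_nonneg_left (h T (mem_powerset.1 hT)).le (w_nonneg T)
  · exact mul_lt_mul_of_pos_left (h T (mem_powerset.1 hT)) ((w_nonneg T).lt_of_ne' hwT)

lemma exists_subset_forall_not_subset (B : Finset α) (H : Finset (Finset α))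
    (hH : ∀ W ∈ H, W ⊆ B ∧ W.Nonempty) {p : ℝ} (hp0 : 0 ≤ p) (hp1 : p ≤ 1) :
    ∃ S ⊆ B, (∀ W ∈ H, ¬W ⊆ S) ∧ p * #B - ∑ W ∈ H, p ^ #W ≤ #S := by
  classical
  obtain ⟨T, hTB, hT⟩ :=
    exists_subset_le_card_sub_card_filter B H (fun W hW => (hH W hW).1) hp0 hp1
  choose v hv using fun W hW => (hH W hW).2
  let V := {W ∈ H | W ⊆ T}.attach.image fun W => v W.1 (mem_of_mem_filter W.1 W.2)
  refine ⟨T \ V, sdiff_subset.trans hTB, fun W hW hWT => ?_, hT.trans ?_⟩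
  · have hvV : v W hW ∈ V :=
      mem_image.2 ⟨⟨W, mem_filter.2 ⟨hW, hWT.trans sdiff_subset⟩⟩, mem_attach _ _, rfl⟩
    exact (mem_sdiff.1 (hWT (hv W hW))).2 hvV
  · have hV : (#V : ℝ) ≤ #{W ∈ H | W ⊆ T} := mod_cast card_image_le.trans_eq card_attach
    have hTV : (#T : ℝ) ≤ #(T \ V) + #V := mod_cast card_le_card_sdiff_add_card
    linarith

end SparseSubsets

section Sidon

variable {G : Type*} [AddGroup G]

lemma subPairCount_eq_richness [DecidableEq G] (μ : G) (S : Finset G) :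
    subPairCount μ S = richness S S (μ + ·) := by
  have himage : {q : G × G | q.1 ∈ S ∧ q.2 ∈ S ∧ q.1 - q.2 = μ}
      = (fun y => (μ + y, y)) '' ({y ∈ S | μ + y ∈ S} : Finset G) := by
    ext ⟨x, y⟩
    simp only [Set.mem_ofPred_eq, coe_filter, Set.mem_image, Prod.mk.injEq]
    constructor
    · rintro ⟨hx, hy, rfl⟩
      exact ⟨y, ⟨hy, by rwa [sub_add_cancel]⟩, sub_add_cancel x y, rfl⟩
    · rintro ⟨_, ⟨hy, hx⟩, rfl, rfl⟩
      exact ⟨hx, hy, add_sub_cancel_right μ _⟩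
  have hinj : Function.Injective fun y : G => (μ + y, y) := fun _ _ h => (Prod.mk.inj h).2
  rw [subPairCount, himage, Set.ncard_image_of_injective _ hinj, Set.ncard_coe_finset, richness]

lemma IsAddSidon.mono {S : Finset G} {K K' : ℝ} (hS : IsAddSidon K S) (hK : K ≤ K') :
    IsAddSidon K' S :=
  fun μ hμ => (hS μ hμ).trans hK

lemma isAddSidon_of_card_le {S : Finset G} {K : ℝ} (hS : #S ≤ K) : IsAddSidon K S := by
  classical
  intro μ _
  rw [subPairCount_eq_richness]
  exact le_trans (mod_cast richness_le_card_left S S _) hS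

variable [DecidableEq G]

lemma exists_subset_disjoint_vadd {μ : G} (hμ : μ ≠ 0) {j : ℕ} {Y : Finset G}
    (hY : 3 * j ≤ #Y) : ∃ Z ⊆ Y, #Z = j ∧ Disjoint Z (μ +ᵥ Z) := by
  induction j generalizing Y with
  | zero => exact ⟨∅, empty_subset Y, card_empty, disjoint_empty_left _⟩
  | succ j ih =>
    obtain ⟨y, hy⟩ : Y.Nonempty := card_pos.1 (by lia)
    have hcard : 3 * j ≤ #(Y \ {y, μ + y, -μ + y}) := by
      have := le_card_sdiff {y, μ + y, -μ + y} Y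
      have : #{y, μ + y, -μ + y} ≤ 3 := card_le_three
      lia
    obtain ⟨Z, hZY, rfl, hZ⟩ := ih hcard
    have avoids : ∀ z ∈ Z, z ≠ y ∧ z ≠ μ + y ∧ μ + z ≠ y := by
      intro z hz
      have hz' := (mem_sdiff.1 (hZY hz)).2
      simp only [mem_insert, mem_singleton, not_or] at hz'
      exact ⟨hz'.1, hz'.2.1, fun h => hz'.2.2 (by rw [← h, neg_add_cancel_left])⟩
    refine ⟨insert y Z, insert_subset hy (hZY.trans sdiff_subset),
      card_insert_of_notMem fun hyZ => (avoids y hyZ).1 rfl, ?_⟩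
    rw [disjoint_left] at hZ ⊢
    simp only [mem_vadd_finset, mem_insert, vadd_eq_add] at hZ ⊢
    rintro z (rfl | hz) ⟨x, rfl | hx, hxz⟩
    · exact hμ (add_eq_right.1 hxz)
    · exact (avoids x hx).2.2 hxz
    · exact (avoids z hz).2.1 hxz.symm
    · exact hZ hz ⟨x, hx, hxz⟩

/-- The `2 * j`-element subsets of `B` that are the union of a `j`-element set and a nonzero
translate of it: the obstructions to being Sidon that have to be avoided. -/
noncomputable def doubledSets (B : Finset G) (j : ℕ) : Finset (Finset G) :=
  open scoped Classical in
  {W ∈ powersetCard (2 * j) B | ∃ μ : G, μ ≠ 0 ∧ ∃ Z : Finset G, #Z = j ∧ W = Z ∪ (μ +ᵥ Z)}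

lemma mem_doubledSets {B W : Finset G} {j : ℕ} :
    W ∈ doubledSets B j ↔
      (W ⊆ B ∧ #W = 2 * j) ∧ ∃ μ : G, μ ≠ 0 ∧ ∃ Z : Finset G, #Z = j ∧ W = Z ∪ (μ +ᵥ Z) := by
  simp only [doubledSets, mem_filter, mem_powersetCard]

lemma isAddSidon_of_forall_doubledSets_not_subset {B S : Finset G} (hSB : S ⊆ B) {j : ℕ}
    (hS : ∀ W ∈ doubledSets B j, ¬W ⊆ S) : IsAddSidon (3 * j : ℕ) S := by
  intro μ hμ
  rw [subPairCount_eq_richness, Nat.cast_le]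
  by_contra! hrich
  obtain ⟨Z, hZ, hZj, hdisj⟩ := exists_subset_disjoint_vadd hμ hrich.le
  have hZS : Z ∪ (μ +ᵥ Z) ⊆ S := by
    refine union_subset (hZ.trans (filter_subset _ S)) fun x hx => ?_
    obtain ⟨z, hz, rfl⟩ := mem_vadd_finset.1 hx
    exact (mem_filter.1 (hZ hz)).2
  have hcard : #(Z ∪ (μ +ᵥ Z)) = 2 * j := by
    rw [card_union_of_disjoint hdisj, card_vadd_finset, hZj, two_mul]
  exact hS _ (mem_doubledSets.2 ⟨⟨hZS.trans hSB, hcard⟩, μ, hμ, Z, hZj, rfl⟩) hZS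

lemma card_doubledSets_le (B : Finset G) {j : ℕ} (hj : 0 < j) :
    #(doubledSets B j) ≤ ∑ μ ∈ (B - B).erase 0, richness B B (μ + ·) ^ j := by
  let I := ((B - B).erase 0).sigma fun μ => powersetCard j {y ∈ B | μ + y ∈ B}
  have doubledSets_subset : doubledSets B j ⊆ I.image fun z => z.2 ∪ (z.1 +ᵥ z.2) := by
    intro W hW
    obtain ⟨⟨hWB, -⟩, μ, hμ, Z, hZj, rfl⟩ := mem_doubledSets.1 hW
    obtain ⟨hZB, hμZB⟩ := union_subset_iff.1 hWB
    have hZ : ∀ z ∈ Z, z ∈ B ∧ μ + z ∈ B := fun z hz =>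
      ⟨hZB hz, hμZB (vadd_mem_vadd_finset hz)⟩
    obtain ⟨z, hz⟩ : Z.Nonempty := card_pos.1 (by lia)
    have hμB : μ ∈ B - B := mem_sub.2 ⟨μ + z, (hZ z hz).2, z, (hZ z hz).1, add_sub_cancel_right μ z⟩
    refine mem_image.2 ⟨⟨μ, Z⟩, mem_sigma.2 ⟨mem_erase.2 ⟨hμ, hμB⟩, ?_⟩, rfl⟩
    exact mem_powersetCard.2 ⟨fun z hz => mem_filter.2 (hZ z hz), hZj⟩
  calc #(doubledSets B j) ≤ #I := (card_le_card doubledSets_subset).trans card_image_le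
    _ = ∑ μ ∈ (B - B).erase 0, (richness B B (μ + ·)).choose j := by
      simp only [I, card_sigma, card_powersetCard, richness]
    _ ≤ ∑ μ ∈ (B - B).erase 0, richness B B (μ + ·) ^ j :=
      sum_le_sum fun μ _ => Nat.choose_le_pow _ _

lemma exists_isAddSidon_of_moment (B : Finset G) {j : ℕ} (hj : 0 < j) {p : ℝ}
    (hp0 : 0 ≤ p) (hp1 : p ≤ 1) :
    ∃ S ⊆ B, IsAddSidon (3 * j : ℕ) S ∧
      p * #B - p ^ (2 * j) * ∑ μ ∈ (B - B).erase 0, (richness B B (μ + ·) : ℝ) ^ j ≤ #S := by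
  obtain ⟨S, hSB, hS, hcard⟩ := exists_subset_forall_not_subset B (doubledSets B j)
    (fun W hW => ⟨(mem_doubledSets.1 hW).1.1,
      card_pos.1 (by have := (mem_doubledSets.1 hW).1.2; lia)⟩) hp0 hp1
  refine ⟨S, hSB, isAddSidon_of_forall_doubledSets_not_subset hSB hS, le_trans ?_ hcard⟩
  have hsum : ∑ W ∈ doubledSets B j, p ^ #W = p ^ (2 * j) * #(doubledSets B j) := by
    rw [sum_congr rfl fun W hW => congrArg (p ^ ·) (mem_doubledSets.1 hW).1.2, sum_const,
      nsmul_eq_mul, mul_comm]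
  rw [hsum]
  gcongr
  exact_mod_cast card_doubledSets_le B hj

lemma sum_richness_add_le (B Δ : Finset G) : ∑ μ ∈ Δ, richness B B (μ + ·) ≤ #B ^ 2 := by
  calc ∑ μ ∈ Δ, richness B B (μ + ·) = #(Δ.sigma fun μ => {y ∈ B | μ + y ∈ B}) :=
        (card_sigma _ _).symm
    _ ≤ #(B ×ˢ B) := by
      refine card_le_card_of_injOn (fun z => (z.2, z.1 + z.2)) ?_ ?_
      · rintro ⟨μ, y⟩ hz
        simp only [mem_coe, mem_sigma, mem_filter, mem_product] at hz ⊢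
        exact hz.2
      · rintro ⟨μ, y⟩ _ ⟨μ', y'⟩ _ heq
        simp only [Prod.mk.injEq] at heq
        obtain ⟨rfl, heq⟩ := heq
        rw [add_right_cancel heq]
    _ = #B ^ 2 := by rw [card_product, sq]

/-- The `t`-popular differences of `B`: the nonzero `μ` with at least `t` representations
`μ = x - y` in `B`. Both steps of the argument depend on whether these are numerous. -/
noncomputable def popularDiffs (B : Finset G) (t : ℝ) : Finset G :=
  {μ ∈ (B - B).erase 0 | t ≤ richness B B (μ + ·)}

lemma le_richness_of_mem_popularDiffs {B : Finset G} {t : ℝ} {μ : G} (hμ : μ ∈ popularDiffs B t) :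
    t ≤ richness B B (μ + ·) :=
  (mem_filter.1 hμ).2

lemma sum_richness_pow_le (B : Finset G) (i : ℕ) {t : ℝ} (ht : 0 ≤ t) :
    ∑ μ ∈ (B - B).erase 0, (richness B B (μ + ·) : ℝ) ^ (i + 1) ≤
      #(popularDiffs B t) * (#B : ℝ) ^ (i + 1) + (#B : ℝ) ^ 2 * t ^ i := by
  rw [← sum_filter_add_sum_filter_not _ fun μ => t ≤ (richness B B (μ + ·) : ℝ)]
  refine add_le_add ?_ ?_
  · rw [← nsmul_eq_mul]
    refine sum_le_card_nsmul _ _ _ fun μ _ => ?_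
    gcongr
    exact richness_le_card_left B B _
  · calc _ ≤ ∑ μ ∈ (B - B).erase 0 with ¬t ≤ (richness B B (μ + ·) : ℝ),
            (richness B B (μ + ·) : ℝ) * t ^ i := by
          refine sum_le_sum fun μ hμ => ?_
          rw [pow_succ']
          gcongr
          exact (not_le.1 (mem_filter.1 hμ).2).le
      _ ≤ (#B : ℝ) ^ 2 * t ^ i := by
          rw [← sum_mul]
          gcongr
          exact_mod_cast sum_richness_add_le B _

end Sidon

section PopularDifferences

lemma mul_rpow_le_rpow_of_le_rpow {C N x y γ : ℝ} (hN : 1 ≤ N) (hC : C ≤ N ^ γ) (hxy : x + γ ≤ y) :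
    C * N ^ x ≤ N ^ y := by
  calc C * N ^ x ≤ N ^ γ * N ^ x := by gcongr
    _ = N ^ (x + γ) := by rw [← Real.rpow_add (by linarith), add_comm]
    _ ≤ N ^ y := Real.rpow_le_rpow_of_exponent_le hN hxy

lemma exists_isAddSidon_of_card_popularDiffs_le {G : Type*} [AddGroup G] [DecidableEq G]
    (B : Finset G) (i : ℕ) {N ε ε' c c₂ γ : ℝ} (hN : 1 ≤ N) (hBN : #B ≤ N)
    (hNB : N ^ (1 - ε') / 2 ≤ #B) (hpop : #(popularDiffs B (N ^ (1 - ε))) ≤ N ^ (1 / 2 - c))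
    (hε : 1 / 2 + c ≤ ε * i) (hc : (2 * i + 1) * c₂ + ε' + γ ≤ c) (hc₂ : c₂ ≤ 1 / 2)
    (hγ : 8 ≤ N ^ γ) :
    ∃ S ⊆ B, IsAddSidon (3 * (i + 1) : ℕ) S ∧ N ^ (1 / 2 + c₂ - ε') / 4 ≤ #S := by
  have hN0 : 0 < N := by linarith
  set p : ℝ := N ^ (c₂ - 1 / 2) with hp
  obtain ⟨S, hSB, hS, hcard⟩ := exists_isAddSidon_of_moment B (j := i + 1) i.succ_pos
    (by positivity : 0 ≤ p) (Real.rpow_le_one_of_one_le_of_nonpos hN (by linarith))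
  refine ⟨S, hSB, hS, le_trans ?_ hcard⟩
  have hmoment : ∑ μ ∈ (B - B).erase 0, (richness B B (μ + ·) : ℝ) ^ (i + 1)
      ≤ 2 * N ^ (i + 3 / 2 - c) := by
    calc _ ≤ #(popularDiffs B (N ^ (1 - ε))) * (#B : ℝ) ^ (i + 1)
          + (#B : ℝ) ^ 2 * (N ^ (1 - ε)) ^ i := sum_richness_pow_le B i (by positivity)
      _ ≤ N ^ (1 / 2 - c) * N ^ (i + 1) + N ^ 2 * (N ^ (1 - ε)) ^ i := by gcongr
      _ = N ^ (i + 3 / 2 - c) + N ^ (2 + (1 - ε) * i) := by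
        rw [← Real.rpow_natCast, ← Real.rpow_add hN0, ← Real.rpow_mul_natCast hN0.le,
          ← Real.rpow_natCast N 2, ← Real.rpow_add hN0]
        push_cast
        ring_nf
      _ ≤ 2 * N ^ (i + 3 / 2 - c) := by
        rw [two_mul]
        gcongr
        linarith
  have hkept : N ^ (1 / 2 + c₂ - ε') / 2 ≤ p * #B := by
    calc N ^ (1 / 2 + c₂ - ε') / 2 = p * (N ^ (1 - ε') / 2) := by
          rw [hp, mul_div_assoc', ← Real.rpow_add hN0]
          ring_nf
      _ ≤ p * #B := by gcongr
  have hdeleted : p ^ (2 * (i + 1)) * ∑ μ ∈ (B - B).erase 0, (richness B B (μ + ·) : ℝ) ^ (i + 1)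
      ≤ N ^ (1 / 2 + c₂ - ε') / 4 := by
    calc _ ≤ p ^ (2 * (i + 1)) * (2 * N ^ (i + 3 / 2 - c)) := by gcongr
      _ = 8 * N ^ ((2 * i + 2) * c₂ + 1 / 2 - c) / 4 := by
        rw [hp, ← Real.rpow_mul_natCast hN0.le, mul_left_comm, ← Real.rpow_add hN0]
        push_cast
        ring_nf
      _ ≤ N ^ (1 / 2 + c₂ - ε') / 4 := by
        gcongr
        exact mul_rpow_le_rpow_of_le_rpow hN hγ (by linarith)
  linarith

lemma sum_richness_add_right {M : Type*} [Add M] [DecidableEq M] (X D : Finset M) :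
    ∑ b ∈ X, richness D X (· + b) = ∑ d ∈ D, richness X X (d + ·) := by
  simp only [richness, card_filter]
  exact sum_comm

lemma exists_subset_forall_le_richness {M : Type*} [Add M] [DecidableEq M] {X D : Finset M}
    (hD : D.Nonempty) {φ : ℝ} (hφ : 0 ≤ φ) (hpop : ∀ d ∈ D, 2 * φ * #X ≤ richness X X (d + ·)) :
    ∃ B ⊆ X, φ * #X ≤ #B ∧ ∀ b ∈ B, φ * #D ≤ richness D X (· + b) := by
  let B := {b ∈ X | φ * #D ≤ richness D X (· + b)}
  refine ⟨B, filter_subset _ X, ?_, fun b hb => (mem_filter.1 hb).2⟩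
  have hlower : #D * (2 * φ * #X) ≤ ∑ b ∈ X, (richness D X (· + b) : ℝ) := by
    rw [← nsmul_eq_mul]
    exact (card_nsmul_le_sum D _ _ hpop).trans_eq (mod_cast (sum_richness_add_right X D).symm)
  have hupper : ∑ b ∈ X, (richness D X (· + b) : ℝ) ≤ #B * #D + #X * (φ * #D) := by
    rw [← sum_filter_add_sum_filter_not X fun b => φ * #D ≤ (richness D X (· + b) : ℝ),
      ← nsmul_eq_mul]
    refine add_le_add (sum_le_card_nsmul _ _ _ fun b _ => mod_cast richness_le_card_left D X _) ?_
    refine (sum_le_card_nsmul _ _ _ fun b hb => (not_le.1 (mem_filter.1 hb).2).le).trans ?_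
    rw [nsmul_eq_mul]
    gcongr
    exact filter_subset _ X
  have hD0 : (0 : ℝ) < #D := mod_cast hD.card_pos
  refine le_of_mul_le_mul_right ?_ hD0
  linarith

lemma richness_add_le_richness_mul_image {G M : Type*} [AddMonoid G] [DecidableEq G]
    [Monoid M] [DecidableEq M] {ψ : AddChar G M} (hψ : Function.Injective ψ)
    (A : Finset G) (μ : G) :
    richness A A (μ + ·) ≤ richness (A.image ψ) (A.image ψ) (ψ μ * ·) := by
  refine card_le_card_of_injOn ψ (fun a ha => ?_) hψ.injOn
  obtain ⟨ha, hμa⟩ := mem_filter.1 ha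
  exact mem_filter.2
    ⟨mem_image_of_mem ψ ha, mem_image.2 ⟨μ + a, hμa, ψ.map_add_eq_mul μ a⟩⟩

end PopularDifferences

section Exponential

-- The line bound is applied with `s = N ^ (1 / 8)` and `k = N ^ (3949 / 4000) / 8`, where
-- `3949 / 4000 = 1 - 1 / 80 - 2 / 8000` combines the two popularity thresholds. The condition
-- `10 ^ 7 ≤ N ^ (1 / 100)` absorbs all absolute constants.
lemma lt_rpow_mul_of_large {N ρ : ℝ} (hN : 1 ≤ N) (hlarge : 10 ^ 7 ≤ N ^ (1 / 100 : ℝ))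
    (hρ : N ^ (1 / 2 - 1 / 32 : ℝ) ≤ ρ) :
    324 * N * (N ^ (1 / 8 : ℝ)) ^ 3 < ρ * (N ^ (3949 / 4000 : ℝ) / 8) := by
  have hN0 : 0 < N := by linarith
  calc 324 * N * (N ^ (1 / 8 : ℝ)) ^ 3 = 324 * N ^ (11 / 8 : ℝ) := by
        rw [mul_assoc, ← Real.rpow_mul_natCast hN0.le, ← Real.rpow_one_add' hN0.le (by norm_num)]
        norm_num
    _ < 10 ^ 7 * N ^ (11 / 8 : ℝ) / 8 := by linarith [Real.rpow_pos_of_pos hN0 (11 / 8)]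
    _ ≤ N ^ (1 / 2 - 1 / 32 + 3949 / 4000 : ℝ) / 8 := by
      gcongr
      exact mul_rpow_le_rpow_of_le_rpow hN hlarge (by norm_num)
    _ = N ^ (1 / 2 - 1 / 32 : ℝ) * (N ^ (3949 / 4000 : ℝ) / 8) := by
      rw [Real.rpow_add hN0, mul_div_assoc]
    _ ≤ ρ * (N ^ (3949 / 4000 : ℝ) / 8) := by gcongr

lemma lt_rpow_mul_mul_of_large {N ρ d : ℝ} (hN : 1 ≤ N) (hlarge : 10 ^ 7 ≤ N ^ (1 / 100 : ℝ))
    (hρ : N ^ (1 / 2 - 1 / 32 : ℝ) ≤ ρ) (hd : N ^ (1 / 2 - 1 / 32 : ℝ) ≤ d) :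
    324 * N ^ 5 < N ^ (1 / 8 : ℝ) * ρ * d * (N ^ (3949 / 4000 : ℝ) / 8) ^ 4 := by
  have hN0 : 0 < N := by linarith
  have hρ0 : 0 ≤ ρ := le_trans (by positivity) hρ
  calc 324 * N ^ 5 < 10 ^ 7 * N ^ (5 : ℝ) / 8 ^ 4 := by
        rw [show N ^ (5 : ℝ) = N ^ 5 from mod_cast Real.rpow_natCast N 5]
        linarith [pow_pos hN0 5]
    _ ≤ N ^ (1 / 8 + (1 / 2 - 1 / 32) + (1 / 2 - 1 / 32) + 3949 / 1000 : ℝ) / 8 ^ 4 := by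
      gcongr
      exact mul_rpow_le_rpow_of_le_rpow hN hlarge (by norm_num)
    _ = N ^ (1 / 8 : ℝ) * N ^ (1 / 2 - 1 / 32 : ℝ) * N ^ (1 / 2 - 1 / 32 : ℝ)
        * (N ^ (3949 / 4000 : ℝ) / 8) ^ 4 := by
      rw [div_pow, ← Real.rpow_mul_natCast hN0.le, mul_div_assoc', ← Real.rpow_add hN0,
        ← Real.rpow_add hN0, ← Real.rpow_add hN0]
      norm_num
    _ ≤ N ^ (1 / 8 : ℝ) * ρ * d * (N ^ (3949 / 4000 : ℝ) / 8) ^ 4 := by gcongr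

variable {F : Type*} [Ring F] [LinearOrder F] [IsStrictOrderedRing F]

lemma rpow_lt_of_popular_translates_of_popular_dilates {X D B R : Finset F}
    (hR : ∀ r ∈ R, 0 < r) {N : ℝ} (hXN : #X = N) (hN : 1 ≤ N)
    (hDN : N ^ (1 / 2 - 1 / 32 : ℝ) ≤ #D) (hRN : N ^ (1 / 2 - 1 / 32 : ℝ) ≤ #R)
    (hB : ∀ b ∈ B, N ^ (-(1 / 8000) : ℝ) / 2 * #D ≤ richness D X (· + b))
    (hdil : ∀ r ∈ R, N ^ (1 - 1 / 80 : ℝ) ≤ richness B B (r * ·)) :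
    N ^ (1 / 100 : ℝ) < 10 ^ 7 := by
  by_contra! hlarge
  have hN0 : 0 < N := by linarith
  have hs : 4 * N ^ (1 / 8 : ℝ) ≤ #D := by
    have hlarge' : 4 ≤ N ^ (1 / 100 : ℝ) := by linarith
    exact (mul_rpow_le_rpow_of_le_rpow hN hlarge' (by norm_num)).trans hDN
  have hk : 4 ≤ N ^ (3949 / 4000 : ℝ) / 8 := by
    have := mul_rpow_le_rpow_of_le_rpow (x := 0) (y := 3949 / 4000) hN hlarge (by norm_num)
    rw [Real.rpow_zero] at this
    linarith
  have hdil' : 2 * (N ^ (3949 / 4000 : ℝ) / 8) / (N ^ (-(1 / 8000) : ℝ) / 2) ^ 2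
      = N ^ (1 - 1 / 80 : ℝ) := by
    calc _ = N ^ (3949 / 4000 : ℝ) / N ^ (-(1 / 4000) : ℝ) := by
          rw [div_pow, ← Real.rpow_mul_natCast hN0.le,
            show (-(1 / 8000) * (2 : ℕ) : ℝ) = -(1 / 4000) by norm_num]
          ring
      _ = N ^ (1 - 1 / 80 : ℝ) := by
          rw [← Real.rpow_sub hN0]
          norm_num
  rcases card_mul_le_or_card_mul_card_mul_le X D B R hR (by positivity) (by positivity) hs hk hB
    (by rwa [hdil']) with h | h <;> rw [hXN] at h
  · exact h.not_gt (lt_rpow_mul_of_large hN hlarge hRN)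
  · exact h.not_gt (lt_rpow_mul_mul_of_large hN hlarge hRN hDN)

variable {G : Type*} [AddGroup G]

lemma card_popularDiffs_le_of_popular_translates [DecidableEq G] {ψ : AddChar G F}
    (hψ : Function.Injective ψ) (hψ0 : ∀ x, 0 < ψ x) {A : Finset G} {X D : Finset F} {N : ℝ}
    (hXN : #X = N) (hN : 1 ≤ N) (hlarge : 10 ^ 7 ≤ N ^ (1 / 100 : ℝ))
    (hDN : N ^ (1 / 2 - 1 / 32 : ℝ) ≤ #D)
    (hA : ∀ b ∈ A.image ψ, N ^ (-(1 / 8000) : ℝ) / 2 * #D ≤ richness D X (· + b)) :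
    #(popularDiffs A (N ^ (1 - 1 / 80 : ℝ))) ≤ N ^ (1 / 2 - 1 / 32 : ℝ) := by
  set P := popularDiffs A (N ^ (1 - 1 / 80 : ℝ))
  by_contra! hP
  refine hlarge.not_gt (rpow_lt_of_popular_translates_of_popular_dilates (R := P.image ψ)
    (forall_mem_image.2 fun μ _ => hψ0 μ) hXN hN hDN ?_ hA (forall_mem_image.2 fun μ hμ => ?_))
  · rw [card_image_of_injective P hψ]
    exact hP.le
  · calc N ^ (1 - 1 / 80 : ℝ) ≤ richness A A (μ + ·) := le_richness_of_mem_popularDiffs hμ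
      _ ≤ _ := mod_cast richness_add_le_richness_mul_image hψ A μ

lemma exists_isAddSidon_of_large {ψ : AddChar G F} (hψ : Function.Injective ψ)
    (hψ0 : ∀ x, 0 < ψ x) (A : Finset G) {N : ℝ} (hAN : #A = N) (hN : 1 ≤ N)
    (hlarge : 10 ^ 7 ≤ N ^ (1 / 100 : ℝ)) :
    (∃ S ⊆ A, IsAddSidon 15000 S ∧ N ^ (1 / 2 + 1 / 500000 : ℝ) / 4 ≤ #S) ∨
      ∃ S ⊆ A.image ψ, IsAddSidon 15000 S ∧ N ^ (1 / 2 + 1 / 500000 : ℝ) / 4 ≤ #S := by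
  classical
  have hN0 : 0 < N := by linarith
  have hγ : 8 ≤ N ^ (1 / 100 : ℝ) := by linarith
  set X := A.image ψ
  have hXN : #X = N := by rw [card_image_of_injective A hψ, hAN]
  let D := popularDiffs X (N ^ (1 - 1 / 8000 : ℝ))
  rcases le_total (#D : ℝ) (N ^ (1 / 2 - 1 / 32 : ℝ)) with hD | hD
  · obtain ⟨S, hSX, hS, hcard⟩ := exists_isAddSidon_of_card_popularDiffs_le X 4999 (ε' := 0)
      (c₂ := 1 / 500000) hN hXN.le (by rw [sub_zero, Real.rpow_one]; linarith) hD
      (by norm_num) (by norm_num) (by norm_num) hγ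
    exact Or.inr ⟨S, hSX, hS.mono (by norm_num), by rwa [sub_zero] at hcard⟩
  have hdensity : N ^ (1 - 1 / 8000 : ℝ) = N ^ (-(1 / 8000) : ℝ) * N := by
    rw [← Real.rpow_add_one hN0.ne']
    norm_num
  obtain ⟨B, hBX, hBcard, hB⟩ := exists_subset_forall_le_richness (X := X) (D := D)
    (φ := N ^ (-(1 / 8000) : ℝ) / 2)
    (card_pos.1 (Nat.cast_pos.1 (lt_of_lt_of_le (by positivity) hD))) (by positivity) fun μ hμ => by
      rw [hXN, mul_div_cancel₀ _ two_ne_zero, ← hdensity]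
      exact le_richness_of_mem_popularDiffs hμ
  obtain ⟨A', hA', rfl⟩ := subset_image_iff.1 hBX
  rw [card_image_of_injective A' hψ, hXN, div_mul_eq_mul_div, ← hdensity] at hBcard
  have hpop := card_popularDiffs_le_of_popular_translates hψ hψ0 hXN hN hlarge hD hB
  obtain ⟨S, hSA', hS, hcard⟩ := exists_isAddSidon_of_card_popularDiffs_le A' 49 (c₂ := 1 / 5000)
    hN ((Nat.cast_le.2 (card_le_card hA')).trans_eq hAN) hBcard hpop
    (by norm_num) (by norm_num) (by norm_num) hγ
  refine Or.inl ⟨S, hSA'.trans hA', hS.mono (by norm_num), hcard.trans' ?_⟩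
  gcongr
  norm_num

lemma exists_isAddSidon_of_small (A : Finset G) {c C : ℝ} (hc : 0 < c) (hc' : c ≤ 1 / 2)
    (hA : #A ≤ C) : ∃ S ⊆ A, IsAddSidon 1 S ∧ C⁻¹ * (#A : ℝ) ^ (1 / 2 + c) ≤ #S := by
  rcases A.eq_empty_or_nonempty with rfl | ⟨a, ha⟩
  · refine ⟨∅, Subset.refl ∅, isAddSidon_of_card_le (by simp), ?_⟩
    rw [card_empty, Nat.cast_zero, Real.zero_rpow (by linarith), mul_zero]
  · have hA1 : (1 : ℝ) ≤ #A := mod_cast card_pos.2 ⟨a, ha⟩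
    refine ⟨{a}, singleton_subset_iff.2 ha, isAddSidon_of_card_le (by simp), ?_⟩
    rw [card_singleton, Nat.cast_one, inv_mul_le_one₀ (by linarith)]
    calc (#A : ℝ) ^ (1 / 2 + c) ≤ (#A : ℝ) ^ (1 : ℝ) :=
          Real.rpow_le_rpow_of_exponent_le hA1 (by linarith)
      _ ≤ C := by rwa [Real.rpow_one]

end Exponential

theorem stmt9_general :
    ∃ c K c0 : ℝ, 0 < c ∧ 1 ≤ K ∧ 0 < c0 ∧
      ∀ {G F : Type*} [AddGroup G] [Ring F] [LinearOrder F] [IsStrictOrderedRing F]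
        (ψ : AddChar G F), Function.Injective ψ → (∀ x, 0 < ψ x) → ∀ A : Finset G,
          (∃ S ⊆ A, IsAddSidon K S ∧ c0 * (#A : ℝ) ^ (1 / 2 + c) ≤ #S) ∨
            ∃ S ⊆ A.image ψ, IsAddSidon K S ∧ c0 * (#A : ℝ) ^ (1 / 2 + c) ≤ #S := by
  refine ⟨1 / 500000, 15000, ((10 ^ 7) ^ 100)⁻¹, by norm_num, by norm_num, by positivity, ?_⟩
  intro G F _ _ _ _ ψ hψ hψ0 A
  rcases le_or_gt ((#A : ℝ) ^ (1 / 100 : ℝ)) (10 ^ 7) with hsmall | hlarge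
  · have hA : (#A : ℝ) ≤ (10 ^ 7) ^ 100 := by
      calc (#A : ℝ) = ((#A : ℝ) ^ (1 / 100 : ℝ)) ^ 100 := by
            rw [← Real.rpow_mul_natCast (Nat.cast_nonneg _)]
            norm_num
        _ ≤ (10 ^ 7) ^ 100 := by gcongr
    obtain ⟨S, hSA, hS, hcard⟩ :=
      exists_isAddSidon_of_small A (c := 1 / 500000) (by norm_num) (by norm_num) hA
    exact Or.inl ⟨S, hSA, hS.mono (by norm_num), hcard⟩
  · have hA1 : (1 : ℝ) ≤ #A := by
      refine Nat.one_le_cast.2 (Nat.pos_of_ne_zero fun h0 => ?_)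
      rw [h0, Nat.cast_zero, Real.zero_rpow (by norm_num)] at hlarge
      norm_num at hlarge
    have hconst : ((10 ^ 7) ^ 100 : ℝ)⁻¹ * (#A : ℝ) ^ (1 / 2 + 1 / 500000 : ℝ)
        ≤ (#A : ℝ) ^ (1 / 2 + 1 / 500000 : ℝ) / 4 := by
      rw [le_div_iff₀' four_pos, ← mul_assoc]
      exact mul_le_of_le_one_left (by positivity) (by norm_num)
    exact (exists_isAddSidon_of_large hψ hψ0 A rfl hA1 hlarge.le).imp
      (fun ⟨S, hSA, hS, hcard⟩ => ⟨S, hSA, hS, hconst.trans hcard⟩)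
      fun ⟨S, hSA, hS, hcard⟩ => ⟨S, hSA, hS, hconst.trans hcard⟩

theorem stmt9 :
    ∃ c K c0 : ℝ, 0 < c ∧ 1 ≤ K ∧ 0 < c0 ∧
      ∀ A : Finset ℝ,
        ∃ S : Finset ℝ,
          (S ⊆ A ∨ S ⊆ A.image Real.exp) ∧ IsAddSidon K S ∧
          c0 * (A.card : ℝ) ^ ((1 : ℝ) / 2 + c) ≤ S.card := by
  obtain ⟨c, K, c0, hc, hK, hc0, h⟩ := stmt9_general
  exact ⟨c, K, c0, hc, hK, hc0, fun A =>
    (h (AddChar.toMonoidHomEquiv.symm Real.expMonoidHom) Real.exp_injective Real.exp_pos A).elim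
      (fun ⟨S, hSA, hS⟩ => ⟨S, Or.inl hSA, hS⟩) fun ⟨S, hSA, hS⟩ => ⟨S, Or.inr hSA, hS⟩⟩
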